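/- arXiv:2110.08414 — 2 statements merged into one kernel-verified Lean document; each statement's English description precedes it below -/
import Mathlib

section
/- Let C be a ZMod p-linear subspace of (Fin n → ZMod p) and C^⊥ = {v | ∀ c ∈ C, ⟨v,c⟩ = 0}. For any a, b ∈ (Fin n → ZMod p), the error operator D(a,b) commutes with D(x,x) for every x ∈ C^⊥ if and only if a − b ∈ C. -/
/-!
Composing the operators gives `D(a,b) D(c,d)|y⟩ = ω^(⟨b,y+c⟩ + ⟨d,y⟩) |y + c + a⟩`, so
`D(a,b)` and `D(c,d)` commute iff `⟨b,c⟩ = ⟨d,a⟩`, because `ω` has exact order `p`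
(`errD_commute_iff`). For `c = d = x` this reads `⟨x, a - b⟩ = 0`. Requiring it for all `x ∈ C^⊥`
says `a - b ∈ (C^⊥)^⊥ = C`; the last equality is `mem_of_forall_ip_eq_zero`, obtained from
the double annihilator theorem after identifying functionals with dot products.
-/

/-- The primitive `p`-th root of unity `ω = exp(2πi/p)`. -/
noncomputable def omg (p : ℕ) : ℂ := Complex.exp (2 * Real.pi * Complex.I / p)

/-- The inner product `⟨u,v⟩ = ∑ i, u i * v i` on `(Fin n → ZMod p)`. -/
def ip {p n : ℕ} (u v : Fin n → ZMod p) : ZMod p := ∑ i, u i * v i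

/-- The error operator `D(a,b)`, the matrix of
`X(a₁)Z(b₁) ⊗ ⋯ ⊗ X(aₙ)Z(bₙ)`, acting as `D(a,b)|y⟩ = ω^⟨b,y⟩ |y + a⟩`. -/
noncomputable def errD {p n : ℕ} (a b : Fin n → ZMod p) :
    Matrix (Fin n → ZMod p) (Fin n → ZMod p) ℂ :=
  fun x y => if x = y + a then omg p ^ (ip b y).val else 0

lemma omg_isPrimitiveRoot (p : ℕ) [Fact p.Prime] : IsPrimitiveRoot (omg p) p :=
  Complex.isPrimitiveRoot_exp p (Fact.out : p.Prime).ne_zero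

lemma omg_pow_val_add {p : ℕ} [Fact p.Prime] (u v : ZMod p) :
    omg p ^ u.val * omg p ^ v.val = omg p ^ (u + v).val := by
  rw [← pow_add, ZMod.val_add, ← pow_mod_orderOf, ← (omg_isPrimitiveRoot p).eq_orderOf]

lemma omg_pow_val_inj {p : ℕ} [Fact p.Prime] {u v : ZMod p} :
    omg p ^ u.val = omg p ^ v.val ↔ u = v :=
  ⟨fun h => ZMod.val_injective p
    ((omg_isPrimitiveRoot p).pow_inj (ZMod.val_lt u) (ZMod.val_lt v) h), fun h => by rw [h]⟩

lemma ip_eq_dotProduct {p n : ℕ} (u v : Fin n → ZMod p) : ip u v = u ⬝ᵥ v := rfl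

lemma errD_mul_apply {p n : ℕ} [Fact p.Prime] (a b c d x y : Fin n → ZMod p) :
    (errD a b * errD c d) x y =
      if x = y + c + a then omg p ^ (ip b (y + c) + ip d y).val else 0 := by
  -- only the intermediate basis vector `y + c` contributes to the matrix product
  rw [Matrix.mul_apply, Finset.sum_eq_single (y + c)]
  · simp only [errD, if_true, ite_mul, zero_mul, omg_pow_val_add]
  · intro z _ hz
    simp [errD, hz]
  · simp

lemma errD_commute_iff {p n : ℕ} [Fact p.Prime] (a b c d : Fin n → ZMod p) :
    Commute (errD a b) (errD c d) ↔ ip b c = ip d a := by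
  constructor
  · intro h
    -- the column `y = 0` already carries the phase condition
    have h0 := congrFun (congrFun h.eq (a + c)) 0
    rw [errD_mul_apply, errD_mul_apply, if_pos (by abel), if_pos (by abel),
      omg_pow_val_inj] at h0
    simpa [ip_eq_dotProduct] using h0
  · intro h
    ext x y
    rw [errD_mul_apply, errD_mul_apply, add_right_comm y c a]
    simp only [ip_eq_dotProduct, dotProduct_add] at h ⊢
    rw [h, show b ⬝ᵥ y + d ⬝ᵥ a + d ⬝ᵥ y = d ⬝ᵥ y + d ⬝ᵥ a + b ⬝ᵥ y by ring]

/-- The nontrivial inclusion `(C^⊥)^⊥ ≤ C`. -/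
lemma mem_of_forall_ip_eq_zero {p n : ℕ} [Fact p.Prime]
    (C : Submodule (ZMod p) (Fin n → ZMod p)) (w : Fin n → ZMod p)
    (h : ∀ x : Fin n → ZMod p, (∀ c ∈ C, ip x c = 0) → ip x w = 0) : w ∈ C := by
  rw [← Subspace.forall_mem_dualAnnihilator_apply_eq_zero_iff C w]
  intro φ hφ
  obtain ⟨x, rfl⟩ := (dotProductEquiv (ZMod p) (Fin n)).surjective φ
  exact h x fun c hc => (Submodule.mem_dualAnnihilator _).1 hφ c hc

/-- `D(a,b)` commutes with `D(x,x)` for every `x ∈ C^⊥` iff `a - b ∈ C`. -/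
theorem errD_commute_with_diagonal_generators_iff (p : ℕ) [Fact p.Prime] (n : ℕ)
    (hn : 1 ≤ n) (C : Submodule (ZMod p) (Fin n → ZMod p))
    (a b : Fin n → ZMod p) :
    (∀ x ∈ {v : Fin n → ZMod p | ∀ c ∈ C, ip v c = 0},
        Commute (errD a b) (errD x x)) ↔ a - b ∈ C := by
  have key : ∀ x : Fin n → ZMod p, Commute (errD a b) (errD x x) ↔ ip x (a - b) = 0 := by
    intro x
    rw [errD_commute_iff]
    simp only [ip_eq_dotProduct, dotProduct_sub, sub_eq_zero, dotProduct_comm b x]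
    exact eq_comm
  simp only [key, Set.mem_ofPred_eq]
  exact ⟨mem_of_forall_ip_eq_zero C (a - b), fun hab x hx => hx _ hab⟩
end

section
/- Let p be an odd prime and ω = Complex.exp(2 * Real.pi * Complex.I / p). Let M be the complex p × p matrix indexed by ZMod p with entries M(x,y) = ω^(y.val) if x = y + 1 and 0 otherwise (so M = X(1)Z(1), where X(1)|x⟩ = |x+1⟩ and Z(1)|x⟩ = ω^x |x⟩). For each κ ∈ {0, …, p−1}, define ψ_κ : ZMod p → ℂ by ψ_κ(i) = p^(−1/2) · ω^(ĩ(ĩ−1)/2 − ĩκ), where ĩ ∈ {0, …, p−1} is the canonical representative of i and the exponent is an integer (ĩ(ĩ−1) is even). Then M.mulVec ψ_κ = ω^κ • ψ_κ; that is, ψ_κ is an eigenvector of X(1)Z(1) with eigenvalue ω^κ. -/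
/-- The matrix `M = X(1)Z(1)` on `ℂ^p`: `M(x,y) = ω^(y.val)` if `x = y + 1`, else `0`. -/
noncomputable def XZ (p : ℕ) : Matrix (ZMod p) (ZMod p) ℂ :=
  fun x y => if x = y + 1 then omg p ^ y.val else 0

/-- The eigenstate `ψ_κ(i) = p^(-1/2) · ω^(ĩ(ĩ-1)/2 - ĩκ)` of `X(1)Z(1)`. -/
noncomputable def psiVec (p : ℕ) (κ : ℕ) : ZMod p → ℂ :=
  fun i => (1 / Real.sqrt p) *
    omg p ^ ((i.val : ℤ) * ((i.val : ℤ) - 1) / 2 - (i.val : ℤ) * (κ : ℤ))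

theorem omg_ne_zero (p : ℕ) : omg p ≠ 0 := Complex.exp_ne_zero _

theorem omg_pow_self (p : ℕ) (hp : p ≠ 0) : omg p ^ p = 1 :=
  (Complex.isPrimitiveRoot_exp p hp).pow_eq_one

theorem add_triangular (n k : ℤ) :
    n + (n * (n - 1) / 2 - n * k) = k + ((n + 1) * (n + 1 - 1) / 2 - (n + 1) * k) := by
  have h : (n + 1) * (n + 1 - 1) = n * (n - 1) + n * 2 := by ring
  rw [h, Int.add_mul_ediv_right _ _ two_ne_zero]
  ring

/-- The exponent of `ψ_κ` evaluated at `p` is a multiple of `p`; this uses that `p` is odd. -/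
theorem omg_zpow_wrap (p : ℕ) (hp : Odd p) (k : ℤ) :
    omg p ^ ((p : ℤ) * ((p : ℤ) - 1) / 2 - (p : ℤ) * k) = 1 := by
  have hp0 : p ≠ 0 := hp.pos.ne'
  obtain ⟨m, hm⟩ := hp
  have h : (p : ℤ) * ((p : ℤ) - 1) / 2 - (p : ℤ) * k = (p : ℤ) * (m - k) := by
    have h2 : (p : ℤ) * ((p : ℤ) - 1) = (p * m) * 2 := by
      rw [hm]; push_cast; ring
    rw [h2, Int.mul_ediv_cancel _ two_ne_zero]
    ring
  rw [h, zpow_mul, zpow_natCast, omg_pow_self p hp0, one_zpow]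

/-- For an odd prime `p` and `0 ≤ κ ≤ p - 1`, the vector `ψ_κ` is an eigenvector of
`X(1)Z(1)` with eigenvalue `ω^κ`. -/
theorem psiVec_eigenvector (p : ℕ) [Fact p.Prime] (hodd : p ≠ 2)
    (κ : ℕ) (hκ : κ < p) :
    (XZ p).mulVec (psiVec p κ) = omg p ^ κ • psiVec p κ := by
  have hp : p.Prime := Fact.out
  ext x
  obtain ⟨y, rfl⟩ : ∃ y, x = y + 1 := ⟨x - 1, by ring⟩
  have hrow : (XZ p).mulVec (psiVec p κ) (y + 1) = omg p ^ y.val * psiVec p κ y := by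
    simp [Matrix.mulVec, dotProduct, XZ]
  -- The representative of `y + 1` may be replaced by the integer `y.val + 1`.
  have hsucc : psiVec p κ (y + 1) = (1 / Real.sqrt p) *
      omg p ^ (((y.val : ℤ) + 1) * ((y.val : ℤ) + 1 - 1) / 2 - ((y.val : ℤ) + 1) * (κ : ℤ)) := by
    have hval : (y + 1).val = (y.val + 1) % p := by
      rw [ZMod.val_add, ZMod.val_one]
    unfold psiVec
    rcases (Nat.succ_le_of_lt y.val_lt).lt_or_eq with h | h
    · rw [hval, Nat.mod_eq_of_lt h]
      push_cast
      rfl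
    · have h' : (y.val : ℤ) + 1 = p := by exact_mod_cast h
      have h0 : (y + 1).val = 0 := by rw [hval, show y.val + 1 = p from h, Nat.mod_self]
      rw [h', h0, omg_zpow_wrap p (hp.odd_of_ne_two hodd)]
      simp
  rw [hrow, Pi.smul_apply, smul_eq_mul, hsucc, psiVec, mul_left_comm, mul_left_comm (omg p ^ κ),
    ← zpow_natCast, ← zpow_natCast, ← zpow_add₀ (omg_ne_zero p), ← zpow_add₀ (omg_ne_zero p),
    add_triangular]
end
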